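/- Let S be a splayed sequence of Reeb domains of length k with type data (t_1,...,t_{k+1}). Then there exists a unique splayed sequence of Reeb domains U with the same length k and the same type data such that [U] = [S] in the group G and the associated sequence of Reeb chords rho(U) is 123-reduced; moreover rho(U) equals the 123-reduction of rho(S). -/

import Mathlib

/-! ## The torus algebra -/

/-- The two idempotents of the torus algebra. -/
inductive Idem : Type
  | m | l
deriving DecidableEq

/-- Reeb chords of the torus algebra. -/
inductive Chord : Type
  | r1 | r2 | r3 | r12 | r23 | r123
deriving DecidableEq

open Chord

/-- The idempotent `ι` with `ι * ρ = ρ`. -/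
def iotaStart : Chord → Idem
  | r1 => Idem.m | r2 => Idem.l | r3 => Idem.m
  | r12 => Idem.m | r23 => Idem.l | r123 => Idem.m

/-- The idempotent `ι` with `ρ * ι = ρ`. -/
def iotaEnd : Chord → Idem
  | r1 => Idem.l | r2 => Idem.m | r3 => Idem.l
  | r12 => Idem.m | r23 => Idem.l | r123 => Idem.l

/-- A chord is jumping if its starting and ending idempotents differ. -/
def Jumping (c : Chord) : Prop := iotaStart c ≠ iotaEnd c

/-- The partial product of Reeb chords (`none` encodes product zero). -/
def mul? : Chord → Chord → Option Chord
  | r1, r2 => some r12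
  | r2, r3 => some r23
  | r1, r23 => some r123
  | r12, r3 => some r123
  | _, _ => none

/-- A 123-reduction step: replace an adjacent 123-composable pair by `ρ₁₂₃`. -/
inductive Step123 : List Chord → List Chord → Prop
  | mk (pre post : List Chord) (a b : Chord) (hab : mul? a b = some r123) :
      Step123 (pre ++ a :: b :: post) (pre ++ r123 :: post)

/-- A sequence is 123-reduced if no 123-reduction step applies. -/
def Reduced123 (s : List Chord) : Prop := ∀ t, ¬ Step123 s t

/-- The lower endpoint (0-based quadrant index) of the interval of a chord. -/
def loIdx : Chord → Fin 3
  | r1 => 0 | r2 => 1 | r3 => 2 | r12 => 0 | r23 => 1 | r123 => 0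

/-- The upper endpoint (0-based quadrant index) of the interval of a chord. -/
def hiIdx : Chord → Fin 3
  | r1 => 0 | r2 => 1 | r3 => 2 | r12 => 1 | r23 => 2 | r123 => 2

/-- The non-jumping chord `π_ι` associated to an idempotent: `π_{ι_m} = ρ₁₂`,
`π_{ι_l} = ρ₂₃`. -/
def piIdem : Idem → Chord
  | Idem.m => r12
  | Idem.l => r23

/-! ## Splayed sequences of Reeb domains -/

/-- A splayed sequence of Reeb domains of length `k`: jumping chords `r 0, …, r (k-1)` with
matching idempotents, and nonnegative multiplicities `n 0, …, n k`. -/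
structure SplayedSeq (k : ℕ) where
  n : Fin (k + 1) → ℕ
  r : Fin k → Chord
  jump : ∀ i, Jumping (r i)
  coh : ∀ (i : ℕ) (h1 : i < k) (h2 : i + 1 < k), iotaEnd (r ⟨i, h1⟩) = iotaStart (r ⟨i + 1, h2⟩)

/-- The type data of a splayed sequence: `t i = iotaStart (r i)` for `i < k` and
`t k = iotaEnd (r (k-1))`. -/
def typeData {k : ℕ} (S : SplayedSeq k) (i : Fin (k + 1)) : Idem :=
  if h : (i : ℕ) < k then iotaStart (S.r ⟨i, h⟩)
  else if hk : 0 < k then iotaEnd (S.r ⟨k - 1, by omega⟩)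
  else Idem.m

/-- The sequence of Reeb chords associated to a splayed sequence of Reeb domains: for
`i = 0,…,k` in order, `n i` copies of `π_{t i}` followed (when `i < k`) by `r i`. -/
def rhoList {k : ℕ} (S : SplayedSeq k) : List Chord :=
  ((List.finRange (k + 1)).map (fun a =>
    List.replicate (S.n a) (piIdem (typeData S a)) ++
      if h : (a : ℕ) < k then [S.r ⟨a, h⟩] else [])).flatten

/-- The free abelian group on the quadrant generators `Q^i_t`, `0 ≤ i < k`, `t ∈ {1,2,3}`. -/
abbrev FreeG (k : ℕ) := (Fin k × Fin 3) →₀ ℤ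

/-- The relation vector identifying the half-disk classes of consecutive rows `a`, `a+1`,
depending on the type of the curve `δ^{a+1}` between them. -/
noncomputable def relVec (k : ℕ) (t : Fin (k + 1) → Idem) (a : ℕ) (h : a + 1 < k) : FreeG k :=
  if t ⟨a + 1, by omega⟩ = Idem.m then
    (Finsupp.single (⟨a, by omega⟩, (0 : Fin 3)) 1 + Finsupp.single (⟨a, by omega⟩, (1 : Fin 3)) 1)
      - (Finsupp.single (⟨a + 1, h⟩, (0 : Fin 3)) 1 + Finsupp.single (⟨a + 1, h⟩, (1 : Fin 3)) 1)
  else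
    (Finsupp.single (⟨a, by omega⟩, (1 : Fin 3)) 1 + Finsupp.single (⟨a, by omega⟩, (2 : Fin 3)) 1)
      - (Finsupp.single (⟨a + 1, h⟩, (1 : Fin 3)) 1 + Finsupp.single (⟨a + 1, h⟩, (2 : Fin 3)) 1)

/-- The set of defining relations of the group `G`. -/
def relSet (k : ℕ) (t : Fin (k + 1) → Idem) : Set (FreeG k) :=
  { x | ∃ (a : ℕ) (h : a + 1 < k), x = relVec k t a h }

/-- The group `G`: the abelian group generated by the quadrant classes `Q^i_t` subject to
the half-disk relations determined by the type data `t`. -/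
abbrev G (k : ℕ) (t : Fin (k + 1) → Idem) :=
  FreeG k ⧸ Submodule.span ℤ (relSet k t)

/-- The quadrant generator `Q^i_t` in `G`. -/
noncomputable def Qgen (k : ℕ) (t : Fin (k + 1) → Idem) (i : Fin k) (q : Fin 3) : G k t :=
  Submodule.Quotient.mk (Finsupp.single (i, q) 1)

/-- The class `B^i(ρ)` of a chord `ρ = ρ_{[s,e]}`: the sum of the quadrants `Q^i_s,…,Q^i_e`. -/
noncomputable def Bclass (k : ℕ) (t : Fin (k + 1) → Idem) (i : Fin k) (c : Chord) : G k t :=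
  ∑ q : Fin 3, if loIdx c ≤ q ∧ q ≤ hiIdx c then Qgen k t i q else 0

/-- The half-disk class `H^i` of the curve `δ^{i+1}` (0-based curve index `a ∈ {0,…,k}`,
using row `min a (k-1)`). -/
noncomputable def Hclass (k : ℕ) (t : Fin (k + 1) → Idem) (a : Fin (k + 1)) : G k t :=
  if hk : 0 < k then
    let b : Fin k := ⟨min (a : ℕ) (k - 1), by omega⟩
    if t a = Idem.m then Qgen k t b 0 + Qgen k t b 1 else Qgen k t b 1 + Qgen k t b 2
  else 0

/-- The total class `[S] = ∑ n_i • H^i + ∑ B^i(r_i)` of a splayed sequence of Reeb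
domains. -/
noncomputable def totalClass (k : ℕ) (t : Fin (k + 1) → Idem) (S : SplayedSeq k) : G k t :=
  (∑ a : Fin (k + 1), (S.n a) • Hclass k t a) + ∑ i : Fin k, Bclass k t i (S.r i)

/-!
The pairs `(ρ₁, ρ₂₃)` and `(ρ₁₂, ρ₃)` that can be composed in `ρ(S)` are exactly the pairs formed by
a chord `r i` equal to `ρ₁` (resp. `ρ₃`) and an adjacent copy of `π` at the curve after (resp.
before) it. Composing replaces `r i` by `ρ₁₂₃` and removes this copy of `π`; since
`B(ρ₁) + H = B(ρ₁₂₃)` and `B(ρ₃) + H = B(ρ₁₂₃)` for the respective half-disks, the total class does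
not change. As `ρ(S)` gets shorter, iterating this yields a reduced `U`.

For uniqueness, consider the quadrant of the half-disk `H a` which is not shared by the half-disks
of the other type: `Q₁` for a meridional curve, `Q₃` for a longitudinal one. The multiplicity of a
class at this quadrant, in the rows on either side of the curve, is a functional on `G` dual to
`H a`. In a reduced `U`, a chord `r i` starting at `ι_m` is `ρ₃` (resp. `ρ₁`) precisely when the
multiplicity of `[U]` at the curve before (resp. after) it vanishes, so `[U]` determines all
chords `r i`, and then all `n a`.
-/

theorem mul?_eq_some_r123_iff {a b : Chord} :
    mul? a b = some r123 ↔ a = r1 ∧ b = r23 ∨ a = r12 ∧ b = r3 := by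
  cases a <;> cases b <;> simp [mul?]

theorem Jumping.eq_r2 {c : Chord} (hc : Jumping c) (hl : iotaStart c = Idem.l) : c = r2 := by
  cases c <;> simp_all [Jumping, iotaStart, iotaEnd]

theorem Jumping.eq_r1_or_r3_or_r123 {c : Chord} (hc : Jumping c) (hm : iotaStart c = Idem.m) :
    c = r1 ∨ c = r3 ∨ c = r123 := by
  cases c <;> simp_all [Jumping, iotaStart, iotaEnd]

theorem Jumping.iotaEnd_eq_l {c : Chord} (hc : Jumping c) (hm : iotaStart c = Idem.m) :
    iotaEnd c = Idem.l := by
  cases c <;> simp_all [Jumping, iotaStart, iotaEnd]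

theorem Jumping.mul?_ne_r123 {c d : Chord} (hc : Jumping c) (hd : Jumping d) :
    mul? c d ≠ some r123 := by
  rw [Ne, mul?_eq_some_r123_iff]
  rintro (⟨-, rfl⟩ | ⟨rfl, -⟩)
  · exact hd rfl
  · exact hc rfl

theorem eq_r1_of_mul?_piIdem {c : Chord} {τ : Idem} (h : mul? c (piIdem τ) = some r123) :
    c = r1 := by
  cases τ <;> simp_all [mul?_eq_some_r123_iff, piIdem]

theorem eq_r3_of_piIdem_mul? {c : Chord} {τ : Idem} (h : mul? (piIdem τ) c = some r123) :
    c = r3 := by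
  cases τ <;> simp_all [mul?_eq_some_r123_iff, piIdem]

theorem piIdem_mul?_piIdem_ne_r123 (τ τ' : Idem) :
    mul? (piIdem τ) (piIdem τ') ≠ some r123 := by
  cases τ <;> cases τ' <;> simp [mul?, piIdem]

/-! ### Reduction steps on lists of chords -/

theorem Step123.length_lt {x y : List Chord} (h : Step123 x y) : y.length < x.length := by
  obtain ⟨pre, post, a, b, -⟩ := h
  simp

theorem Step123.append_left {x y : List Chord} (h : Step123 x y) (l : List Chord) :
    Step123 (l ++ x) (l ++ y) := by
  obtain ⟨pre, post, a, b, hab⟩ := h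
  simpa using Step123.mk (l ++ pre) post a b hab

theorem Step123.append_right {x y : List Chord} (h : Step123 x y) (l : List Chord) :
    Step123 (x ++ l) (y ++ l) := by
  obtain ⟨pre, post, a, b, hab⟩ := h
  simpa using Step123.mk pre (post ++ l) a b hab

theorem Step123.flatMap {α : Type*} {f g : α → List Chord} {l : List α} {i : α} (hl : l.Nodup)
    (hi : i ∈ l) (hfg : ∀ j, j ≠ i → f j = g j) (h : Step123 (f i) (g i)) :
    Step123 (l.flatMap f) (l.flatMap g) := by
  obtain ⟨before, after, rfl, hbefore⟩ := List.eq_append_cons_of_mem hi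
  have hafter : i ∉ after := (List.nodup_cons.1 hl.of_append_right).1
  have flatMap_eq {l' : List α} (hl' : i ∉ l') : l'.flatMap f = l'.flatMap g :=
    List.flatMap_congr fun j hj => hfg j fun hji => hl' (hji ▸ hj)
  simp only [List.flatMap_append, List.flatMap_cons, flatMap_eq hbefore, flatMap_eq hafter]
  exact (h.append_right _).append_left _

theorem reduced123_of_isChain {l : List Chord}
    (h : l.IsChain fun a b => mul? a b ≠ some r123) : Reduced123 l := by
  rintro - ⟨pre, post, a, b, hab⟩
  exact (List.isChain_cons_cons.1 (List.isChain_append.1 h).2.1).1 hab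

theorem isChain_replicate_piIdem (n : ℕ) (τ : Idem) :
    (List.replicate n (piIdem τ)).IsChain fun a b => mul? a b ≠ some r123 :=
  List.isChain_replicate_of_rel n (piIdem_mul?_piIdem_ne_r123 τ τ)

theorem flatMap_finRange_castSucc_append {α : Type*} :
    ∀ {k : ℕ} (f : Fin (k + 1) → List α) (g : Fin k → List α),
      ((List.finRange k).flatMap fun i => f i.castSucc ++ g i) ++ f (Fin.last k) =
        f 0 ++ (List.finRange k).flatMap fun i => g i ++ f i.succ
  | 0, f, g => by simp
  | k + 1, f, g => by
    have ih := flatMap_finRange_castSucc_append (fun i => f i.succ) (fun i => g i.succ)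
    simpa [List.finRange_succ, List.flatMap_map] using ih

/-! ### Type data and chord sequences -/

section TypeData

variable {k : ℕ} (S : SplayedSeq k)

theorem typeData_castSucc (i : Fin k) : typeData S i.castSucc = iotaStart (S.r i) := by
  simp [typeData]

theorem typeData_succ (i : Fin k) : typeData S i.succ = iotaEnd (S.r i) := by
  obtain ⟨i, hi⟩ := i
  by_cases hlast : i + 1 < k
  · simpa [typeData, hlast] using (S.coh i hi hlast).symm
  · obtain rfl : k = i + 1 := by omega
    simp [typeData]

theorem typeData_congr {S T : SplayedSeq k} (hs : ∀ i, iotaStart (S.r i) = iotaStart (T.r i))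
    (he : ∀ i, iotaEnd (S.r i) = iotaEnd (T.r i)) : typeData S = typeData T := by
  funext a
  simp only [typeData, hs, he]

theorem rhoList_eq_flatMap_append :
    rhoList S = ((List.finRange k).flatMap fun i =>
        List.replicate (S.n i.castSucc) (piIdem (iotaStart (S.r i))) ++ [S.r i]) ++
      List.replicate (S.n (Fin.last k)) (piIdem (typeData S (Fin.last k))) := by
  simp [rhoList, List.finRange_succ_last, List.flatMap_def, Function.comp_def, typeData_castSucc]

theorem rhoList_eq_append_flatMap :
    rhoList S = List.replicate (S.n 0) (piIdem (typeData S 0)) ++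
      (List.finRange k).flatMap fun i =>
        S.r i :: List.replicate (S.n i.succ) (piIdem (iotaEnd (S.r i))) := by
  simpa only [typeData_castSucc, typeData_succ, List.singleton_append, rhoList_eq_flatMap_append]
    using flatMap_finRange_castSucc_append
      (fun a => List.replicate (S.n a) (piIdem (typeData S a))) (fun i => [S.r i])

end TypeData

/-! ### The group `G` and multiplicities at outer quadrants -/

section Multiplicity

variable {k : ℕ}

/-- Type data in which consecutive curves have different types, as is the case for the type data of
any splayed sequence. -/
def Alternating (t : Fin (k + 1) → Idem) : Prop :=
  ∀ i : Fin k, t i.castSucc ≠ t i.succ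

theorem alternating_typeData (S : SplayedSeq k) : Alternating (typeData S) := fun i => by
  rw [typeData_castSucc, typeData_succ]
  exact S.jump i

/-- The lift of `B^i(ρ)` to the free group on the quadrants. For `ρ = π_τ` this is the half-disk
bounded by a curve of type `τ`, computed in row `i`. -/
noncomputable def freeClass (i : Fin k) (c : Chord) : FreeG k :=
  ∑ q : Fin 3, if loIdx c ≤ q ∧ q ≤ hiIdx c then Finsupp.single (i, q) 1 else 0

theorem relVec_eq_sub (t : Fin (k + 1) → Idem) {a : ℕ} (h : a + 1 < k) :
    relVec k t a h = freeClass ⟨a, by omega⟩ (piIdem (t ⟨a + 1, by omega⟩)) -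
      freeClass ⟨a + 1, h⟩ (piIdem (t ⟨a + 1, by omega⟩)) := by
  cases ht : t ⟨a + 1, by omega⟩ <;>
    simp [relVec, ht, freeClass, piIdem, Fin.sum_univ_three, loIdx, hiIdx]

theorem Bclass_eq_mk (t : Fin (k + 1) → Idem) (i : Fin k) (c : Chord) :
    Bclass k t i c = Submodule.Quotient.mk (freeClass i c) := by
  simp only [Bclass, freeClass, Qgen, ← Submodule.mkQ_apply, map_sum, apply_ite, map_zero]

theorem Bclass_of_mul? (t : Fin (k + 1) → Idem) (i : Fin k) {a b c : Chord}
    (h : mul? a b = some c) : Bclass k t i c = Bclass k t i a + Bclass k t i b := by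
  cases a <;> cases b <;> cases h <;>
    simp [Bclass, Fin.sum_univ_three, loIdx, hiIdx, add_assoc]

theorem Hclass_eq_Bclass (hk : 0 < k) (t : Fin (k + 1) → Idem) (a : Fin (k + 1)) :
    Hclass k t a = Bclass k t ⟨min a (k - 1), by omega⟩ (piIdem (t a)) := by
  cases h : t a <;> simp [Hclass, Bclass, hk, h, piIdem, Fin.sum_univ_three, loIdx, hiIdx]

theorem Hclass_castSucc (t : Fin (k + 1) → Idem) (i : Fin k) :
    Hclass k t i.castSucc = Bclass k t i (piIdem (t i.castSucc)) := by
  rw [Hclass_eq_Bclass i.pos]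
  congr
  simp only [Fin.val_castSucc, inf_eq_left]
  omega

theorem Bclass_piIdem_succ (t : Fin (k + 1) → Idem) {a : ℕ} (h : a + 1 < k) :
    Bclass k t ⟨a + 1, h⟩ (piIdem (t ⟨a + 1, by omega⟩)) =
      Bclass k t ⟨a, by omega⟩ (piIdem (t ⟨a + 1, by omega⟩)) := by
  rw [Bclass_eq_mk, Bclass_eq_mk, eq_comm, Submodule.Quotient.eq, ← relVec_eq_sub]
  exact Submodule.subset_span ⟨a, h, rfl⟩

theorem Hclass_succ (t : Fin (k + 1) → Idem) (i : Fin k) :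
    Hclass k t i.succ = Bclass k t i (piIdem (t i.succ)) := by
  obtain ⟨i, hi⟩ := i
  by_cases hlast : i + 1 < k
  · exact (Hclass_castSucc t ⟨i + 1, hlast⟩).trans (Bclass_piIdem_succ t hlast)
  · obtain rfl : k = i + 1 := by omega
    rw [Hclass_eq_Bclass i.succ_pos]
    congr
    simp

/-- The quadrant of the half-disk of type `τ` that does not lie in the half-disk of the other
type. -/
def outerQuadrant : Idem → Fin 3
  | Idem.m => 0
  | Idem.l => 2

/-- The sum of the multiplicities, in the rows adjacent to the curve `a`, at the outer quadrant of
the half-disk bounded by `a`. -/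
noncomputable def freeOuterMult (t : Fin (k + 1) → Idem) (a : Fin (k + 1)) : FreeG k →ₗ[ℤ] ℤ :=
  Finsupp.linearCombination ℤ fun p =>
    if (p.1.castSucc = a ∨ p.1.succ = a) ∧ p.2 = outerQuadrant (t a) then 1 else 0

theorem freeOuterMult_freeClass (t : Fin (k + 1) → Idem) (a : Fin (k + 1)) (i : Fin k) (c : Chord) :
    freeOuterMult t a (freeClass i c) =
      if (i.castSucc = a ∨ i.succ = a) ∧
        loIdx c ≤ outerQuadrant (t a) ∧ outerQuadrant (t a) ≤ hiIdx c then 1 else 0 := by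
  rw [freeClass, map_sum, Finset.sum_eq_single_of_mem _ (Finset.mem_univ (outerQuadrant (t a)))]
  · simp [freeOuterMult, apply_ite, ← ite_and, and_comm]
  · intro q _ hq
    simp [freeOuterMult, apply_ite, hq]

theorem outerQuadrant_mem_piIdem_iff (τ τ' : Idem) :
    loIdx (piIdem τ) ≤ outerQuadrant τ' ∧ outerQuadrant τ' ≤ hiIdx (piIdem τ) ↔ τ = τ' := by
  cases τ <;> cases τ' <;> decide

variable {t : Fin (k + 1) → Idem}

theorem freeOuterMult_piIdem_castSucc (ht : Alternating t) (a : Fin (k + 1)) (i : Fin k) :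
    freeOuterMult t a (freeClass i (piIdem (t i.castSucc))) = if i.castSucc = a then 1 else 0 := by
  simp only [freeOuterMult_freeClass, outerQuadrant_mem_piIdem_iff]
  have := ht i
  grind

theorem freeOuterMult_piIdem_succ (ht : Alternating t) (a : Fin (k + 1)) (i : Fin k) :
    freeOuterMult t a (freeClass i (piIdem (t i.succ))) = if i.succ = a then 1 else 0 := by
  simp only [freeOuterMult_freeClass, outerQuadrant_mem_piIdem_iff]
  have := ht i
  grind

theorem span_relSet_le_ker_freeOuterMult (ht : Alternating t) (a : Fin (k + 1)) :
    Submodule.span ℤ (relSet k t) ≤ LinearMap.ker (freeOuterMult t a) := by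
  rw [Submodule.span_le]
  rintro - ⟨b, h, rfl⟩
  rw [relVec_eq_sub, SetLike.mem_coe, LinearMap.mem_ker, map_sub, sub_eq_zero]
  exact (freeOuterMult_piIdem_succ ht a ⟨b, by omega⟩).trans
    (freeOuterMult_piIdem_castSucc ht a ⟨b + 1, h⟩).symm

/-- The functional on `G` induced by `freeOuterMult`, dual to the half-disk class `Hclass k t a`. -/
noncomputable def outerMult (ht : Alternating t) (a : Fin (k + 1)) : G k t →ₗ[ℤ] ℤ :=
  (Submodule.span ℤ (relSet k t)).liftQ (freeOuterMult t a) (span_relSet_le_ker_freeOuterMult ht a)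

theorem outerMult_Bclass (ht : Alternating t) (a : Fin (k + 1)) (i : Fin k) (c : Chord) :
    outerMult ht a (Bclass k t i c) = freeOuterMult t a (freeClass i c) := by
  rw [Bclass_eq_mk, outerMult, Submodule.liftQ_apply]

theorem outerMult_Hclass (hk : 0 < k) (ht : Alternating t) (a b : Fin (k + 1)) :
    outerMult ht a (Hclass k t b) = if b = a then 1 else 0 := by
  cases b using Fin.lastCases with
  | cast i => rw [Hclass_castSucc, outerMult_Bclass, freeOuterMult_piIdem_castSucc ht]
  | last =>
    obtain ⟨k, rfl⟩ := Nat.exists_eq_add_one.2 hk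
    rw [← Fin.succ_last, Hclass_succ, outerMult_Bclass, freeOuterMult_piIdem_succ ht]

theorem outerMult_totalClass (hk : 0 < k) (ht : Alternating t) (a : Fin (k + 1))
    (S : SplayedSeq k) :
    outerMult ht a (totalClass k t S) = S.n a + ∑ i, outerMult ht a (Bclass k t i (S.r i)) := by
  simp [totalClass, outerMult_Hclass hk]

theorem Jumping.outerQuadrant_iotaStart_mem_iff {c : Chord} (hc : Jumping c) :
    loIdx c ≤ outerQuadrant (iotaStart c) ∧ outerQuadrant (iotaStart c) ≤ hiIdx c ↔
      c = r1 ∨ c = r123 := by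
  revert hc
  unfold Jumping
  cases c <;> decide

theorem Jumping.outerQuadrant_iotaEnd_mem_iff {c : Chord} (hc : Jumping c) :
    loIdx c ≤ outerQuadrant (iotaEnd c) ∧ outerQuadrant (iotaEnd c) ≤ hiIdx c ↔
      c = r3 ∨ c = r123 := by
  revert hc
  unfold Jumping
  cases c <;> decide

theorem outerMult_Bclass_r {S : SplayedSeq k} (hS : typeData S = t) (ht : Alternating t)
    (a : Fin (k + 1)) (i : Fin k) :
    outerMult ht a (Bclass k t i (S.r i)) =
      if i.castSucc = a ∧ (S.r i = r1 ∨ S.r i = r123) ∨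
        i.succ = a ∧ (S.r i = r3 ∨ S.r i = r123) then 1 else 0 := by
  subst hS
  rw [outerMult_Bclass, freeOuterMult_freeClass]
  refine if_congr ?_ rfl rfl
  rw [or_and_right]
  refine or_congr (and_congr_right ?_) (and_congr_right ?_)
  · rintro rfl
    rw [typeData_castSucc, (S.jump i).outerQuadrant_iotaStart_mem_iff]
  · rintro rfl
    rw [typeData_succ, (S.jump i).outerQuadrant_iotaEnd_mem_iff]

theorem outerMult_totalClass_castSucc {S : SplayedSeq k} (hS : typeData S = t) (ht : Alternating t)
    {i : Fin k} (hi : iotaStart (S.r i) = Idem.m) :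
    outerMult ht i.castSucc (totalClass k t S) = S.n i.castSucc + if S.r i = r3 then 0 else 1 := by
  rw [outerMult_totalClass i.pos, Finset.sum_eq_single_of_mem i (Finset.mem_univ i)]
  · rw [outerMult_Bclass_r hS]
    rcases (S.jump i).eq_r1_or_r3_or_r123 hi with hr | hr | hr <;>
      simp [hr, i.castSucc_lt_succ.ne']
  · intro j _ hji
    rw [outerMult_Bclass_r hS, if_neg]
    rintro (⟨hcurve, -⟩ | ⟨hcurve, hr⟩)
    · exact hji (Fin.castSucc_injective _ hcurve)
    · have hend : iotaEnd (S.r j) = Idem.m := by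
        rw [← typeData_succ, hcurve, typeData_castSucc, hi]
      rcases hr with hr | hr <;> simp [hr, iotaEnd] at hend

theorem outerMult_totalClass_succ {S : SplayedSeq k} (hS : typeData S = t) (ht : Alternating t)
    {i : Fin k} (hi : iotaStart (S.r i) = Idem.m) :
    outerMult ht i.succ (totalClass k t S) = S.n i.succ + if S.r i = r1 then 0 else 1 := by
  rw [outerMult_totalClass i.pos, Finset.sum_eq_single_of_mem i (Finset.mem_univ i)]
  · rw [outerMult_Bclass_r hS]
    rcases (S.jump i).eq_r1_or_r3_or_r123 hi with hr | hr | hr <;>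
      simp [hr, i.castSucc_lt_succ.ne]
  · intro j _ hji
    rw [outerMult_Bclass_r hS, if_neg]
    rintro (⟨hcurve, hr⟩ | ⟨hcurve, -⟩)
    · have hstart : iotaStart (S.r j) = Idem.l := by
        rw [← typeData_castSucc, hcurve, typeData_succ, (S.jump i).iotaEnd_eq_l hi]
      rcases hr with hr | hr <;> simp [hr, iotaStart] at hstart
    · exact hji (Fin.succ_injective _ hcurve)

end Multiplicity

/-! ### Reduced splayed sequences -/

namespace SplayedSeq

variable {k : ℕ} {S : SplayedSeq k}

attribute [ext] SplayedSeq

/-- The condition on the data of a splayed sequence that amounts to its chord sequence being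
123-reduced. -/
def IsReduced (S : SplayedSeq k) : Prop :=
  ∀ i : Fin k, (S.r i = r1 → S.n i.succ = 0) ∧ (S.r i = r3 → S.n i.castSucc = 0)

theorem IsReduced.mul?_piIdem_ne_r123 (hS : S.IsReduced) {i : Fin k} (hn : S.n i.succ ≠ 0)
    (τ : Idem) : mul? (S.r i) (piIdem τ) ≠ some r123 :=
  fun h => hn ((hS i).1 (eq_r1_of_mul?_piIdem h))

theorem IsReduced.piIdem_mul?_ne_r123 (hS : S.IsReduced) {i : Fin k} (hn : S.n i.castSucc ≠ 0)
    (τ : Idem) : mul? (piIdem τ) (S.r i) ≠ some r123 :=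
  fun h => hn ((hS i).2 (eq_r3_of_piIdem_mul? h))

theorem IsReduced.isChain_flatMap (hS : S.IsReduced) :
    ((List.finRange k).flatMap fun i =>
        S.r i :: List.replicate (S.n i.succ) (piIdem (iotaEnd (S.r i)))).IsChain
      fun a b => mul? a b ≠ some r123 := by
  rw [List.flatMap_def, List.isChain_flatten (by simp)]
  constructor
  · simp only [List.mem_map, List.mem_finRange, true_and, forall_exists_index,
      forall_apply_eq_imp_iff]
    intro i
    refine (isChain_replicate_piIdem _ _).cons fun y hy => ?_
    obtain ⟨hn, rfl⟩ := List.mem_replicate.1 (List.mem_of_mem_head? hy)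
    exact hS.mul?_piIdem_ne_r123 hn _
  · rw [List.isChain_map, List.isChain_iff_getElem]
    intro i hi x hx y hy
    simp only [List.length_finRange] at hi
    simp only [List.getElem_finRange, Fin.cast_mk, List.head?_cons, Option.mem_some] at hx hy
    subst hy
    rcases List.mem_cons.1 (List.mem_of_mem_getLast? hx) with rfl | hx
    · exact (S.jump _).mul?_ne_r123 (S.jump _)
    · obtain ⟨hn, rfl⟩ := List.mem_replicate.1 hx
      exact hS.piIdem_mul?_ne_r123 (i := ⟨i + 1, hi⟩) hn _

theorem IsReduced.reduced123_rhoList (hS : S.IsReduced) : Reduced123 (rhoList S) := by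
  apply reduced123_of_isChain
  rw [rhoList_eq_append_flatMap, List.isChain_append]
  refine ⟨isChain_replicate_piIdem _ _, hS.isChain_flatMap, fun x hx y hy => ?_⟩
  obtain ⟨hn, rfl⟩ := List.mem_replicate.1 (List.mem_of_mem_getLast? hx)
  cases k with
  | zero => simp at hy
  | succ k =>
    obtain rfl : S.r 0 = y := by simpa [List.finRange_succ] using hy
    exact hS.piIdem_mul?_ne_r123 (i := 0) hn _

theorem IsReduced.r_eq_r3_iff {t : Fin (k + 1) → Idem} (hS : S.IsReduced)
    (htype : typeData S = t) (ht : Alternating t) {i : Fin k} (hi : iotaStart (S.r i) = Idem.m) :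
    S.r i = r3 ↔ outerMult ht i.castSucc (totalClass k t S) = 0 := by
  rw [outerMult_totalClass_castSucc htype ht hi]
  by_cases hr : S.r i = r3
  · simp [hr, (hS i).2 hr]
  · simp only [hr, if_false, false_iff]
    omega

theorem IsReduced.r_eq_r1_iff {t : Fin (k + 1) → Idem} (hS : S.IsReduced)
    (htype : typeData S = t) (ht : Alternating t) {i : Fin k} (hi : iotaStart (S.r i) = Idem.m) :
    S.r i = r1 ↔ outerMult ht i.succ (totalClass k t S) = 0 := by
  rw [outerMult_totalClass_succ htype ht hi]
  by_cases hr : S.r i = r1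
  · simp [hr, (hS i).1 hr]
  · simp only [hr, if_false, false_iff]
    omega

theorem IsReduced.r_eq {U V : SplayedSeq k} {t : Fin (k + 1) → Idem} (hU : U.IsReduced)
    (hV : V.IsReduced) (htU : typeData U = t) (htV : typeData V = t)
    (hclass : totalClass k t U = totalClass k t V) : U.r = V.r := by
  funext i
  have ht : Alternating t := htU ▸ alternating_typeData U
  have hstart : iotaStart (V.r i) = iotaStart (U.r i) := by
    rw [← typeData_castSucc, ← typeData_castSucc, htU, htV]
  cases hi : iotaStart (U.r i) with
  | l => rw [(U.jump i).eq_r2 hi, (V.jump i).eq_r2 (hstart.trans hi)]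
  | m =>
    have hr3 : U.r i = r3 ↔ V.r i = r3 := by
      rw [hU.r_eq_r3_iff htU ht hi, hV.r_eq_r3_iff htV ht (hstart.trans hi), hclass]
    have hr1 : U.r i = r1 ↔ V.r i = r1 := by
      rw [hU.r_eq_r1_iff htU ht hi, hV.r_eq_r1_iff htV ht (hstart.trans hi), hclass]
    have hUi := (U.jump i).eq_r1_or_r3_or_r123 hi
    have hVi := (V.jump i).eq_r1_or_r3_or_r123 (hstart.trans hi)
    grind

theorem IsReduced.eq_of_totalClass_eq (hk : 0 < k) {U V : SplayedSeq k} {t : Fin (k + 1) → Idem}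
    (hU : U.IsReduced) (hV : V.IsReduced) (htU : typeData U = t) (htV : typeData V = t)
    (hclass : totalClass k t U = totalClass k t V) : U = V := by
  have hr : U.r = V.r := hU.r_eq hV htU htV hclass
  have ht : Alternating t := htU ▸ alternating_typeData U
  refine SplayedSeq.ext (funext fun a => ?_) hr
  have hmult := congrArg (outerMult ht a) hclass
  rw [outerMult_totalClass hk, outerMult_totalClass hk, hr] at hmult
  exact_mod_cast add_right_cancel hmult

/-! ### Reduction steps on splayed sequences -/

theorem iotaStart_update_r123 {i : Fin k} (hi : iotaStart (S.r i) = Idem.m) (j : Fin k) :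
    iotaStart (Function.update S.r i r123 j) = iotaStart (S.r j) := by
  rcases eq_or_ne j i with rfl | hj
  · rw [Function.update_self, hi, iotaStart]
  · simp [hj]

theorem iotaEnd_update_r123 {i : Fin k} (hi : iotaStart (S.r i) = Idem.m) (j : Fin k) :
    iotaEnd (Function.update S.r i r123 j) = iotaEnd (S.r j) := by
  rcases eq_or_ne j i with rfl | hj
  · rw [Function.update_self, (S.jump j).iotaEnd_eq_l hi, iotaEnd]
  · simp [hj]

/-- The splayed sequence obtained by merging one copy of `π` at the curve `a` into the chord `r i`,
which becomes `ρ₁₂₃`. It is meant for `a` adjacent to row `i` and `S.n a ≠ 0`. -/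
def merge (S : SplayedSeq k) (i : Fin k) (hi : iotaStart (S.r i) = Idem.m) (a : Fin (k + 1)) :
    SplayedSeq k where
  n := Function.update S.n a (S.n a - 1)
  r := Function.update S.r i r123
  jump j := by
    rw [Jumping, iotaStart_update_r123 hi, iotaEnd_update_r123 hi]
    exact S.jump j
  coh j h1 h2 := by
    rw [iotaStart_update_r123 hi, iotaEnd_update_r123 hi]
    exact S.coh j h1 h2

variable {i : Fin k} (hi : iotaStart (S.r i) = Idem.m) (a : Fin (k + 1))

theorem typeData_merge : typeData (S.merge i hi a) = typeData S :=
  typeData_congr (iotaStart_update_r123 hi) (iotaEnd_update_r123 hi)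

theorem totalClass_merge (t : Fin (k + 1) → Idem) (ha : S.n a ≠ 0)
    (hB : Bclass k t i r123 = Bclass k t i (S.r i) + Hclass k t a) :
    totalClass k t (S.merge i hi a) = totalClass k t S := by
  have hn : S.n = (S.merge i hi a).n + Pi.single a 1 := by
    funext b
    rcases eq_or_ne b a with rfl | hb
    · simp [merge, Nat.sub_add_cancel (Nat.one_le_iff_ne_zero.2 ha)]
    · simp [merge, hb]
  have hr (j : Fin k) : Bclass k t j ((S.merge i hi a).r j) =
      Bclass k t j (S.r j) + if j = i then Hclass k t a else 0 := by
    rcases eq_or_ne j i with rfl | hj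
    · simp [merge, hB]
    · simp [merge, hj]
  simp only [totalClass, hn, hr, Pi.add_apply, add_smul, Finset.sum_add_distrib]
  simp only [Finset.sum_ite_eq', Finset.mem_univ, ↓reduceIte, Pi.single_apply, ite_smul,
    one_smul, zero_nsmul]
  abel

theorem step123_merge_succ (hr : S.r i = r1) (hn : S.n i.succ ≠ 0) :
    Step123 (rhoList S) (rhoList (S.merge i hi i.succ)) := by
  obtain ⟨m, hm⟩ := Nat.exists_eq_succ_of_ne_zero hn
  rw [rhoList_eq_append_flatMap, rhoList_eq_append_flatMap, typeData_merge]
  have hzero : (S.merge i hi i.succ).n 0 = S.n 0 := by simp [merge, (Fin.succ_ne_zero i).symm]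
  rw [hzero]
  refine Step123.append_left (Step123.flatMap (List.nodup_finRange k) (List.mem_finRange i) ?_ ?_) _
  · intro j hj
    simp [merge, hj]
  · simpa [merge, hr, hm, iotaEnd, piIdem, List.replicate_succ] using
      Step123.mk [] (List.replicate m r23) r1 r23 rfl

theorem step123_merge_castSucc (hr : S.r i = r3) (hn : S.n i.castSucc ≠ 0) :
    Step123 (rhoList S) (rhoList (S.merge i hi i.castSucc)) := by
  obtain ⟨m, hm⟩ := Nat.exists_eq_succ_of_ne_zero hn
  rw [rhoList_eq_flatMap_append, rhoList_eq_flatMap_append, typeData_merge]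
  have hlast : (S.merge i hi i.castSucc).n (Fin.last k) = S.n (Fin.last k) := by
    simp [merge, (Fin.castSucc_ne_last i).symm]
  rw [hlast]
  refine Step123.append_right
    (Step123.flatMap (List.nodup_finRange k) (List.mem_finRange i) ?_ ?_) _
  · intro j hj
    simp [merge, hj]
  · simpa [merge, hr, hm, iotaStart, piIdem, List.replicate_succ'] using
      Step123.mk (List.replicate m r12) [] r12 r3 rfl

theorem exists_step123_of_not_isReduced (hS : ¬ S.IsReduced) :
    ∃ T : SplayedSeq k, typeData T = typeData S ∧
      totalClass k (typeData S) T = totalClass k (typeData S) S ∧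
      Step123 (rhoList S) (rhoList T) := by
  obtain ⟨i, ⟨hr, hn⟩ | ⟨hr, hn⟩⟩ :
      ∃ i : Fin k, S.r i = r1 ∧ S.n i.succ ≠ 0 ∨ S.r i = r3 ∧ S.n i.castSucc ≠ 0 := by
    simpa only [IsReduced, not_forall, not_and_or, exists_prop] using hS
  · have hi : iotaStart (S.r i) = Idem.m := by rw [hr]; rfl
    refine ⟨_, typeData_merge hi _, totalClass_merge hi _ _ hn ?_, step123_merge_succ hi hr hn⟩
    rw [Hclass_succ, typeData_succ, hr]
    exact Bclass_of_mul? _ i rfl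
  · have hi : iotaStart (S.r i) = Idem.m := by rw [hr]; rfl
    refine ⟨_, typeData_merge hi _, totalClass_merge hi _ _ hn ?_, step123_merge_castSucc hi hr hn⟩
    rw [Hclass_castSucc, typeData_castSucc, hr, add_comm]
    exact Bclass_of_mul? _ i rfl

theorem isReduced_of_reduced123 (hS : Reduced123 (rhoList S)) : S.IsReduced := by
  by_contra h
  obtain ⟨T, -, -, hstep⟩ := exists_step123_of_not_isReduced h
  exact hS _ hstep

theorem exists_isReduced (S : SplayedSeq k) :
    ∃ U : SplayedSeq k, typeData U = typeData S ∧
      totalClass k (typeData S) U = totalClass k (typeData S) S ∧ U.IsReduced ∧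
      Relation.ReflTransGen Step123 (rhoList S) (rhoList U) := by
  by_cases hS : S.IsReduced
  · exact ⟨S, rfl, rfl, hS, .refl⟩
  · obtain ⟨T, htype, hclass, hstep⟩ := exists_step123_of_not_isReduced hS
    have := hstep.length_lt
    obtain ⟨U, htypeU, hclassU, hU, hsteps⟩ := exists_isReduced T
    rw [htype] at htypeU hclassU
    exact ⟨U, htypeU, hclassU.trans hclass, hU, hsteps.head hstep⟩
termination_by (rhoList S).length

end SplayedSeq

/-- For every splayed sequence of Reeb domains `S` there is a unique splayed sequence of
Reeb domains `U` with the same length and type data whose total class in `G` agrees with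
that of `S` and whose associated sequence of Reeb chords is 123-reduced; moreover the
associated sequence of Reeb chords of `U` is the 123-reduction of that of `S` (it is a
123-reduced sequence reachable from `ρ(S)` by 123-reduction steps). -/
theorem exists_unique_reduced_splayedSeq (k : ℕ) (hk : 0 < k) (S : SplayedSeq k) :
    (∃! U : SplayedSeq k, typeData U = typeData S ∧
        totalClass k (typeData S) U = totalClass k (typeData S) S ∧
        Reduced123 (rhoList U)) ∧
    (∀ U : SplayedSeq k, (typeData U = typeData S ∧
        totalClass k (typeData S) U = totalClass k (typeData S) S ∧
        Reduced123 (rhoList U)) →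
      Relation.ReflTransGen Step123 (rhoList S) (rhoList U)) := by
  obtain ⟨U, htype, hclass, hU, hsteps⟩ := S.exists_isReduced
  have eq_U : ∀ V : SplayedSeq k, (typeData V = typeData S ∧
      totalClass k (typeData S) V = totalClass k (typeData S) S ∧
      Reduced123 (rhoList V)) → V = U := by
    rintro V ⟨htypeV, hclassV, hV⟩
    exact (SplayedSeq.isReduced_of_reduced123 hV).eq_of_totalClass_eq hk hU htypeV htype
      (hclassV.trans hclass.symm)
  refine ⟨⟨U, ⟨htype, hclass, hU.reduced123_rhoList⟩, eq_U⟩, fun V hV => ?_⟩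
  rw [eq_U V hV]
  exact hsteps
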